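/- Let U : ℝ → ℂ be a smooth function compactly supported in (0,∞), let t, x ∈ ℝ, N > 0, let q be a positive integer and a a positive integer with gcd(a,q) = 1, and let ā be an integer with a·ā ≡ 1 (mod q). Then Σ_{r=1}^∞ r^{−it} e(rā/q) e(−rx/(aq)) U(r/N) = N^{1−it} · Σ_{r ∈ ℤ, r ≡ −ā (mod q)} U†( N(x + ra)/(aq), 1 − it ), where U†(v, w) = ∫_0^∞ U(u) e(−vu) u^{w−1} du, and the sum on the right-hand side converges absolutely. -/

import Mathlib

open Complex Real

noncomputable def e (x : ℝ) : ℂ := Complex.exp (2 * Real.pi * Complex.I * x)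

/-- The Fourier–Mellin transform `U†(v,w) = ∫_0^∞ U(u) e(−vu) u^{w−1} du`. -/
noncomputable def Udag (U : ℝ → ℂ) (v : ℝ) (w : ℂ) : ℂ :=
  ∫ u in Set.Ioi (0:ℝ), U u * e (-(v * u)) * (u : ℂ) ^ (w - 1)

/-!
Up to the constant `N ^ (-s)`, the summand on the left is `e(rθ) V(r/N)`, where
`V(u) = U(u) u ^ (-s)` and `θ = b/q - x/(aq)`. Since `U` vanishes near `0`, `V` is smooth with
compact support on all of `ℝ`, and `U†(·, 1 - s)` is exactly its Fourier transform. Dilation by `N`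
and modulation by `θ` turn Poisson summation for `V` into a sum of `N · U†(N(n - θ), 1 - s)` over
`n ∈ ℤ`, and `r = qn - b` runs through the residue class of `-b` modulo `q`.
-/

open scoped FourierTransform ContDiff

section Reindexing

variable {M : Type*} [AddCommMonoid M] [TopologicalSpace M]

theorem tsum_ite_one_le_eq_tsum_int {g : ℤ → M} (hg : ∀ n ≤ 0, g n = 0) :
    (∑' r : ℕ, if 1 ≤ r then g r else 0) = ∑' n : ℤ, g n := by
  have hsupport : Function.support g ⊆ Set.range ((↑) : ℕ → ℤ) := fun n hn =>
    ⟨n.toNat, Int.toNat_of_nonneg (not_le.1 fun h => hn (hg n h)).le⟩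
  rw [← Nat.cast_injective.tsum_eq hsupport]
  refine tsum_congr fun r => ?_
  split_ifs with hr
  · rfl
  · exact (hg r (by omega)).symm

theorem hasSum_ite_dvd_add_iff {q : ℤ} (hq : q ≠ 0) (b : ℤ) {g : ℤ → M} {m : M} :
    HasSum (fun r => if q ∣ r + b then g r else 0) m ↔ HasSum (fun n => g (q * n - b)) m := by
  have hinj : Function.Injective fun n : ℤ => q * n - b :=
    sub_left_injective.comp (mul_right_injective₀ hq)
  rw [← hinj.hasSum_iff]
  · simp [Function.comp_def]
  · intro r hr
    refine if_neg fun ⟨n, hn⟩ => hr ⟨n, ?_⟩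
    simp only [← hn, add_sub_cancel_right]

end Reindexing

section Exponential

theorem e_eq_fourierChar (x : ℝ) : e x = 𝐞 x := by
  rw [e, Real.fourierChar_apply]
  push_cast
  ring_nf

theorem e_add (x y : ℝ) : e (x + y) = e x * e y := by
  simp only [e_eq_fourierChar, AddChar.map_add_eq_mul, Circle.coe_mul]

theorem contDiff_e {n : ℕ∞ω} : ContDiff ℝ n e :=
  (contDiff_const.mul ofRealCLM.contDiff).cexp

end Exponential

section Poisson

theorem hasSum_fourier_of_hasCompactSupport {f : ℝ → ℂ} (hf : ContDiff ℝ ∞ f)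
    (hc : HasCompactSupport f) : HasSum (fun n : ℤ => 𝓕 f n) (∑' n : ℤ, f n) := by
  let F := hc.toSchwartzMap hf
  have hdecay : 𝓕 f =O[Filter.cocompact ℝ] fun y => ‖y‖ ^ (-2 : ℝ) :=
    (𝓕 F).isBigO_cocompact_rpow (-2)
  have hsummable : Summable fun n : ℤ => 𝓕 f n :=
    summable_of_isBigO (Real.summable_abs_int_rpow one_lt_two)
      (hdecay.comp_tendsto Int.tendsto_coe_cofinite)
  have hpoisson : ∑' n : ℤ, f n = ∑' n : ℤ, 𝓕 f n := by
    simpa only [zero_add, QuotientAddGroup.mk_zero, fourier_eval_zero, mul_one,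
      SchwartzMap.fourier_coe] using! F.tsum_eq_tsum_fourier 0
  exact hpoisson ▸ hsummable.hasSum

theorem fourier_fourierChar_smul_comp_div {E : Type*} [NormedAddCommGroup E] [NormedSpace ℂ E]
    (f : ℝ → E) (θ : ℝ) {N : ℝ} (hN : N ≠ 0) (w : ℝ) :
    𝓕 (fun y => 𝐞 (y * θ) • f (y / N)) w = |N| • 𝓕 f (N * (w - θ)) := by
  rw [Real.fourier_real_eq, Real.fourier_real_eq, ← MeasureTheory.Measure.integral_comp_div]
  congr 1 with y
  have hphase : -(y * w) + y * θ = -(y / N * (N * (w - θ))) := by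
    field_simp
    ring
  rw [smul_smul, ← AddChar.map_add_eq_mul, hphase]

theorem hasSum_fourier_mul_sub {f : ℝ → ℂ} (hf : ContDiff ℝ ∞ f) (hc : HasCompactSupport f)
    (θ : ℝ) {N : ℝ} (hN : N ≠ 0) :
    HasSum (fun n : ℤ => |N| * 𝓕 f (N * (n - θ))) (∑' n : ℤ, e (n * θ) * f (n / N)) := by
  have hsmooth : ContDiff ℝ ∞ fun y => e (y * θ) * f (y / N) :=
    (contDiff_e.comp (contDiff_id.mul contDiff_const)).mul (hf.comp (contDiff_id.div_const N))
  have hcompact : HasCompactSupport fun y => e (y * θ) * f (y / N) :=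
    (hc.comp_homeomorph (Homeomorph.mulRight₀ N⁻¹ (inv_ne_zero hN))).mul_left
  have hfourier (w : ℝ) :
      𝓕 (fun y => e (y * θ) * f (y / N)) w = |N| * 𝓕 f (N * (w - θ)) := by
    simpa only [e_eq_fourierChar, Circle.smul_def, smul_eq_mul, real_smul]
      using fourier_fourierChar_smul_comp_div f θ hN w
  simpa only [hfourier] using hasSum_fourier_of_hasCompactSupport hsmooth hcompact

end Poisson

section MellinWeight

/-- The Mellin weighting `u ↦ U(u) u ^ (w - 1)`, introduced because its Fourier transform is
`U†(·, w)`. It is used for `U` supported in `(0, ∞)`, so the values of `u ^ (w - 1)` at `u ≤ 0`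
do not matter. -/
noncomputable def mellinWeight (U : ℝ → ℂ) (w : ℂ) (u : ℝ) : ℂ := U u * (u : ℂ) ^ (w - 1)

variable {U : ℝ → ℂ}

theorem mellinWeight_of_nonpos (hsupp : tsupport U ⊆ Set.Ioi 0) (w : ℂ) {u : ℝ} (hu : u ≤ 0) :
    mellinWeight U w u = 0 := by
  rw [mellinWeight, image_eq_zero_of_notMem_tsupport fun h => hu.not_gt (hsupp h), zero_mul]

theorem contDiffAt_ofReal_cpow_const {n : ℕ∞ω} (w : ℂ) {u : ℝ} (hu : 0 < u) :
    ContDiffAt ℝ n (fun u : ℝ => (u : ℂ) ^ w) u :=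
  have hanalytic : AnalyticAt ℂ (fun z : ℂ => z ^ w) u :=
    analyticAt_id.cpow analyticAt_const (ofReal_mem_slitPlane.2 hu)
  (hanalytic.contDiffAt.restrict_scalars ℝ).comp u ofRealCLM.contDiff.contDiffAt

theorem contDiff_mellinWeight {n : ℕ∞ω} (hU : ContDiff ℝ n U) (hsupp : tsupport U ⊆ Set.Ioi 0)
    (w : ℂ) : ContDiff ℝ n (mellinWeight U w) :=
  contMDiff_iff_contDiff.1 <| contMDiff_of_tsupport fun _ hu =>
    (hU.contDiffAt.mul <| contDiffAt_ofReal_cpow_const (w - 1) <|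
      hsupp (tsupport_mul_subset_left hu)).contMDiffAt

theorem hasCompactSupport_mellinWeight (hcpt : HasCompactSupport U) (w : ℂ) :
    HasCompactSupport (mellinWeight U w) :=
  hcpt.mul_right

theorem Udag_eq_fourier_mellinWeight (hsupp : tsupport U ⊆ Set.Ioi 0) (v : ℝ) (w : ℂ) :
    Udag U v w = 𝓕 (mellinWeight U w) v := by
  rw [Real.fourier_real_eq, ← MeasureTheory.setIntegral_eq_integral_of_forall_compl_eq_zero
    (s := Set.Ioi 0) fun u hu => by rw [mellinWeight_of_nonpos hsupp w (not_lt.1 hu), smul_zero]]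
  refine MeasureTheory.setIntegral_congr_fun measurableSet_Ioi fun u _ => ?_
  simp only [mellinWeight, e_eq_fourierChar, Circle.smul_def, smul_eq_mul, mul_comm v u]
  ring

theorem cpow_mul_comp_div_eq_mellinWeight (U : ℝ → ℂ) (w : ℂ) {y N : ℝ} (hy : 0 ≤ y)
    (hN : 0 < N) :
    (y : ℂ) ^ (w - 1) * U (y / N) = (N : ℂ) ^ (w - 1) * mellinWeight U w (y / N) := by
  have hy_eq : (y : ℂ) = (N : ℂ) * ((y / N : ℝ) : ℂ) := by
    rw [← ofReal_mul, mul_div_cancel₀ y hN.ne']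
  rw [mellinWeight, hy_eq, mul_cpow_ofReal_nonneg hN.le (by positivity)]
  ring

theorem hasSum_Udag_mul_sub (hU : ContDiff ℝ ∞ U) (hcpt : HasCompactSupport U)
    (hsupp : tsupport U ⊆ Set.Ioi 0) (w : ℂ) (θ : ℝ) {N : ℝ} (hN : 0 < N) :
    HasSum (fun n : ℤ => (N : ℂ) ^ w * Udag U (N * (n - θ)) w)
      (∑' r : ℕ, if 1 ≤ r then (r : ℂ) ^ (w - 1) * e (r * θ) * U (r / N) else 0) := by
  have hN₀ : (N : ℂ) ≠ 0 := ofReal_ne_zero.2 hN.ne'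
  let g : ℤ → ℂ := fun n => (N : ℂ) ^ (w - 1) * (e (n * θ) * mellinWeight U w (n / N))
  have hg : ∀ n ≤ 0, g n = 0 := fun n hn => by
    have hn' : (n / N : ℝ) ≤ 0 := div_nonpos_of_nonpos_of_nonneg (mod_cast hn) hN.le
    simp only [g, mellinWeight_of_nonpos hsupp w hn', mul_zero]
  have hterm (r : ℕ) : (r : ℂ) ^ (w - 1) * e (r * θ) * U (r / N) = g r := by
    have hweight := cpow_mul_comp_div_eq_mellinWeight U w r.cast_nonneg hN
    simp only [g, ofReal_natCast, Int.cast_natCast] at hweight ⊢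
    linear_combination e (r * θ) * hweight
  simp only [hterm]
  have hpow (z : ℂ) : (N : ℂ) ^ (w - 1) * (|N| * z) = (N : ℂ) ^ w * z := by
    rw [abs_of_pos hN, ← mul_assoc, cpow_sub _ _ hN₀, cpow_one, div_mul_cancel₀ _ hN₀]
  rw [tsum_ite_one_le_eq_tsum_int hg, tsum_mul_left]
  simpa only [hpow, ← Udag_eq_fourier_mellinWeight hsupp] using
    (hasSum_fourier_mul_sub (contDiff_mellinWeight hU hsupp w)
      (hasCompactSupport_mellinWeight hcpt w) θ hN.ne').mul_left ((N : ℂ) ^ (w - 1))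

end MellinWeight

theorem stmt13_general {U : ℝ → ℂ} (hU : ContDiff ℝ ∞ U) (hcpt : HasCompactSupport U)
    (hsupp : tsupport U ⊆ Set.Ioi 0) (s : ℂ) (x : ℝ) {N : ℝ} (hN : 0 < N)
    {q : ℕ} (hq : q ≠ 0) {a : ℝ} (ha : a ≠ 0) (b : ℤ) :
    ((∑' r : ℕ, if 1 ≤ r then
        (r : ℂ) ^ (-s) * e (r * b / q) * e (-(r * x / (a * q))) * U (r / N) else 0) =
      (N : ℂ) ^ (1 - s) *
        ∑' r : ℤ, if (q : ℤ) ∣ r + b then Udag U (N * (x + r * a) / (a * q)) (1 - s) else 0) ∧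
    Summable fun r : ℤ =>
      ‖if (q : ℤ) ∣ r + b then Udag U (N * (x + r * a) / (a * q)) (1 - s) else 0‖ := by
  have hNpow : (N : ℂ) ^ (1 - s) ≠ 0 := cpow_ne_zero_iff.2 (.inl (ofReal_ne_zero.2 hN.ne'))
  set θ : ℝ := b / q - x / (a * q) with hθ
  have hphase (r : ℕ) : e (r * b / q) * e (-(r * x / (a * q))) = e (r * θ) := by
    rw [← e_add, hθ]
    ring_nf
  have hfreq (n : ℤ) : N * (x + (q * n - b : ℤ) * a) / (a * q) = N * (n - θ) := by
    rw [hθ]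
    push_cast
    field_simp
    ring
  have hsum := hasSum_Udag_mul_sub hU hcpt hsupp (1 - s) θ hN
  simp only [sub_sub_cancel_left, ← hphase, ← hfreq, ← mul_assoc] at hsum
  have hresidue := (hasSum_ite_dvd_add_iff (mod_cast hq) b
    (g := fun r : ℤ => (N : ℂ) ^ (1 - s) * Udag U (N * (x + r * a) / (a * q)) (1 - s))).2 hsum
  simp only [← mul_ite_zero (_ ∣ _)] at hresidue
  exact ⟨hresidue.tsum_eq.symm.trans tsum_mul_left,
    ((summable_mul_left_iff hNpow).1 hresidue.summable).norm⟩

/-- Poisson summation applied to the `r`-sum: for `U` smooth and compactly supported in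
`(0,∞)`, `t, x ∈ ℝ`, `N > 0`, `q, a` positive with `(a,q) = 1` and `a·ā ≡ 1 (mod q)`,
`Σ_{r≥1} r^{−it} e(rā/q) e(−rx/(aq)) U(r/N)
  = N^{1−it} Σ_{r ≡ −ā (mod q)} U†(N(x+ra)/(aq), 1−it)`,
and the right-hand sum converges absolutely. -/
theorem stmt13 (U : ℝ → ℂ) (hU : ContDiff ℝ (⊤ : ℕ∞) U) (hcpt : HasCompactSupport U)
    (hsupp : tsupport U ⊆ Set.Ioi 0) (t x N : ℝ) (hN : 0 < N)
    (q a : ℕ) (hq : 0 < q) (ha : 0 < a) (hcop : Nat.gcd a q = 1)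
    (abar : ℤ) (habar : ((a : ℤ) * abar) % (q : ℤ) = 1 % (q : ℤ)) :
    ((∑' r : ℕ, if 1 ≤ r then
        (r : ℂ) ^ (-(Complex.I * (t : ℂ))) * e ((r : ℝ) * (abar : ℝ) / (q : ℝ)) *
          e (-((r : ℝ) * x / ((a : ℝ) * (q : ℝ)))) * U ((r : ℝ) / N)
      else 0) =
      (N : ℂ) ^ ((1 : ℂ) - Complex.I * (t : ℂ)) *
        (∑' r : ℤ, if (q : ℤ) ∣ (r + abar) then
            Udag U (N * (x + (r : ℝ) * (a : ℝ)) / ((a : ℝ) * (q : ℝ))) (1 - Complex.I * (t : ℂ))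
          else 0)) ∧
    Summable (fun r : ℤ => ‖if (q : ℤ) ∣ (r + abar) then
        Udag U (N * (x + (r : ℝ) * (a : ℝ)) / ((a : ℝ) * (q : ℝ))) (1 - Complex.I * (t : ℂ))
      else 0‖) :=
  stmt13_general hU hcpt hsupp (I * t) x hN hq.ne' (Nat.cast_ne_zero.2 ha.ne') abar
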